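/- Under the hypotheses of the convergence part of Theorem 3 (ψ₁,…,ψ_M continuous and linearly independent on [0,2π]; h₀ > 0; W_e, W_u, W_{Δu} continuous nonnegative with W_e pointwise positive on [0,2π] or W_u pointwise positive on [0,2π]; iteration θ_{j+1} = Q_ψ θ_j + L_ψ (c − h₀ θ_j) with fixed point θ*), the sequence (θ_j) is monotonically convergent in the weighted norm ‖x‖_{M_ψ} = √(xᵀ M_ψ x): for every j, ‖θ_{j+1} − θ*‖_{M_ψ} ≤ ‖θ_j − θ*‖_{M_ψ}, with strict inequality whenever θ_j ≠ θ*. -/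

import Mathlib

open Matrix Finset intervalIntegral

/-- The weighted Gram matrix of the basis functions `ψ` with weight `w`:
`(gram M ψ w) k l = ∫₀^{2π} w(α) ψ_k(α) ψ_l(α) dα`. -/
noncomputable def gram (M : ℕ) (ψ : Fin M → ℝ → ℝ) (w : ℝ → ℝ) :
    Matrix (Fin M) (Fin M) ℝ :=
  Matrix.of fun k l => ∫ α in (0:ℝ)..(2 * Real.pi), w α * ψ k α * ψ l α

lemma gram_add' (M : ℕ) (ψ : Fin M → ℝ → ℝ) (hcont : ∀ k, Continuous (ψ k))
    (v w : ℝ → ℝ) (hv : Continuous v) (hw : Continuous w) :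
    gram M ψ (fun α => v α + w α) = gram M ψ v + gram M ψ w := by
  ext k l
  have hk := hcont k
  have hl := hcont l
  simp only [_root_.gram, Matrix.of_apply, Matrix.add_apply]
  rw [← intervalIntegral.integral_add]
  · congr 1; ext α; ring
  · exact Continuous.intervalIntegrable (by fun_prop) _ _
  · exact Continuous.intervalIntegrable (by fun_prop) _ _

lemma gram_smul' (M : ℕ) (ψ : Fin M → ℝ → ℝ) (a : ℝ) (w : ℝ → ℝ) :
    gram M ψ (fun α => a * w α) = a • gram M ψ w := by
  ext k l
  simp only [_root_.gram, Matrix.of_apply, Matrix.smul_apply, smul_eq_mul]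
  rw [← intervalIntegral.integral_const_mul]
  congr 1; ext α; ring

lemma gram_symm' (M : ℕ) (ψ : Fin M → ℝ → ℝ) (w : ℝ → ℝ) (x y : Fin M → ℝ) :
    x ⬝ᵥ (gram M ψ w *ᵥ y) = y ⬝ᵥ (gram M ψ w *ᵥ x) := by
  have h : (gram M ψ w)ᵀ = gram M ψ w := by
    ext k l
    simp only [_root_.gram, Matrix.of_apply, Matrix.transpose_apply]
    congr 1; ext α; ring
  rw [Matrix.dotProduct_mulVec, ← Matrix.mulVec_transpose, h, dotProduct_comm]

lemma gram_quad' (M : ℕ) (ψ : Fin M → ℝ → ℝ) (hcont : ∀ k, Continuous (ψ k))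
    (w : ℝ → ℝ) (hw : Continuous w) (x : Fin M → ℝ) :
    x ⬝ᵥ (gram M ψ w *ᵥ x) =
      ∫ α in (0:ℝ)..(2 * Real.pi), w α * (∑ k, x k * ψ k α) ^ 2 := by
  have e : ∀ α, w α * (∑ k, x k * ψ k α) ^ 2 =
      ∑ k, ∑ l, x k * x l * (w α * ψ k α * ψ l α) := by
    intro α
    rw [sq, Finset.sum_mul_sum, Finset.mul_sum]
    refine Finset.sum_congr rfl fun k _ => ?_
    rw [Finset.mul_sum]
    refine Finset.sum_congr rfl fun l _ => ?_
    ring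
  simp only [e]
  rw [intervalIntegral.integral_finsetSum]
  · simp only [dotProduct, Matrix.mulVec]
    refine Finset.sum_congr rfl fun k _ => ?_
    rw [intervalIntegral.integral_finsetSum]
    · rw [Finset.mul_sum]
      refine Finset.sum_congr rfl fun l _ => ?_
      rw [intervalIntegral.integral_const_mul]
      simp only [_root_.gram, Matrix.of_apply]
      ring
    · intro l _
      exact Continuous.intervalIntegrable (by fun_prop) _ _
  · intro k _
    exact Continuous.intervalIntegrable (by fun_prop) _ _

lemma gram_nonneg' (M : ℕ) (ψ : Fin M → ℝ → ℝ) (hcont : ∀ k, Continuous (ψ k))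
    (w : ℝ → ℝ) (hw : Continuous w) (h0 : ∀ α, 0 ≤ w α) (x : Fin M → ℝ) :
    0 ≤ x ⬝ᵥ (gram M ψ w *ᵥ x) := by
  rw [gram_quad' M ψ hcont w hw]
  exact intervalIntegral.integral_nonneg Real.two_pi_pos.le
    fun α _ => mul_nonneg (h0 α) (sq_nonneg _)

lemma gram_pos' (M : ℕ) (ψ : Fin M → ℝ → ℝ) (hcont : ∀ k, Continuous (ψ k))
    (hli : ∀ x : Fin M → ℝ,
      (∀ α ∈ Set.Icc (0:ℝ) (2 * Real.pi), ∑ k, x k * ψ k α = 0) → x = 0)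
    (w : ℝ → ℝ) (hw : Continuous w) (h0 : ∀ α, 0 ≤ w α)
    (hp : ∀ α ∈ Set.Icc (0:ℝ) (2 * Real.pi), 0 < w α) (x : Fin M → ℝ) (hx : x ≠ 0) :
    0 < x ⬝ᵥ (gram M ψ w *ᵥ x) := by
  rw [gram_quad' M ψ hcont w hw]
  have : ∃ α ∈ Set.Icc (0:ℝ) (2 * Real.pi), ∑ k, x k * ψ k α ≠ 0 := by
    by_contra hc
    push Not at hc
    exact hx (hli x hc)
  obtain ⟨α, hα, hne⟩ := this
  refine intervalIntegral.integral_pos Real.two_pi_pos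
    (Continuous.continuousOn (by fun_prop)) (fun α _ => mul_nonneg (h0 α) (sq_nonneg _))
    ⟨α, hα, mul_pos (hp α hα) (by positivity)⟩

/-- **Monotonicity part of Theorem 3 of the paper.** The ILC parameter iterates
converge monotonically to the fixed point `θ*` in the weighted norm
`‖x‖_{M_ψ} = √(xᵀ M_ψ x)`, with strict decrease whenever `θ_j ≠ θ*`. -/
theorem ilc_monotonic_convergence (M : ℕ) (ψ : Fin M → ℝ → ℝ)
    (hcont : ∀ k, Continuous (ψ k))
    (hli : ∀ x : Fin M → ℝ,
      (∀ α ∈ Set.Icc (0:ℝ) (2 * Real.pi), ∑ k, x k * ψ k α = 0) → x = 0)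
    (h₀ : ℝ) (hh₀ : 0 < h₀)
    (We Wu WΔu : ℝ → ℝ)
    (hWec : Continuous We) (hWuc : Continuous Wu) (hWΔc : Continuous WΔu)
    (hWe : ∀ α, 0 ≤ We α) (hWu : ∀ α, 0 ≤ Wu α) (hWΔ : ∀ α, 0 ≤ WΔu α)
    (hpos : (∀ α ∈ Set.Icc (0:ℝ) (2 * Real.pi), 0 < We α) ∨
            (∀ α ∈ Set.Icc (0:ℝ) (2 * Real.pi), 0 < Wu α))
    (c : Fin M → ℝ)
    (Mψ Qψ Lψ : Matrix (Fin M) (Fin M) ℝ)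
    (hMψ : Mψ = gram M ψ (fun α => h₀ ^ 2 * We α + Wu α + WΔu α))
    (hQψ : Qψ = Mψ⁻¹ * gram M ψ (fun α => h₀ ^ 2 * We α + WΔu α))
    (hLψ : Lψ = Mψ⁻¹ * gram M ψ (fun α => h₀ * We α))
    (θstar : Fin M → ℝ)
    (hfix : θstar = Qψ *ᵥ θstar + Lψ *ᵥ (c - h₀ • θstar))
    (θ : ℕ → Fin M → ℝ)
    (hθ : ∀ j, θ (j + 1) = Qψ *ᵥ θ j + Lψ *ᵥ (c - h₀ • θ j)) :
    ∀ j : ℕ,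
      Real.sqrt ((θ (j + 1) - θstar) ⬝ᵥ (Mψ *ᵥ (θ (j + 1) - θstar))) ≤
        Real.sqrt ((θ j - θstar) ⬝ᵥ (Mψ *ᵥ (θ j - θstar))) ∧
      (θ j ≠ θstar →
        Real.sqrt ((θ (j + 1) - θstar) ⬝ᵥ (Mψ *ᵥ (θ (j + 1) - θstar))) <
          Real.sqrt ((θ j - θstar) ⬝ᵥ (Mψ *ᵥ (θ j - θstar)))) := by
  intro j
  set A := gram M ψ (fun α => h₀ ^ 2 * We α + Wu α) with hA
  set D := gram M ψ WΔu with hD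
  have hMAD : Mψ = A + D := by
    rw [hMψ, gram_add' M ψ hcont (fun α => h₀ ^ 2 * We α + Wu α) WΔu (by fun_prop) hWΔc]
  have hAc : Continuous (fun α => h₀ ^ 2 * We α + Wu α) := by fun_prop
  have hA0 : ∀ α, 0 ≤ h₀ ^ 2 * We α + Wu α := fun α =>
    add_nonneg (mul_nonneg (sq_nonneg _) (hWe α)) (hWu α)
  have hAp : ∀ α ∈ Set.Icc (0:ℝ) (2 * Real.pi), 0 < h₀ ^ 2 * We α + Wu α := by
    intro α hα
    rcases hpos with h | h
    · exact add_pos_of_pos_of_nonneg (mul_pos (by positivity) (h α hα)) (hWu α)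
    · exact add_pos_of_nonneg_of_pos (mul_nonneg (sq_nonneg _) (hWe α)) (h α hα)
  have pA := gram_pos' M ψ hcont hli _ hAc hA0 hAp
  have nA := gram_nonneg' M ψ hcont _ hAc hA0
  have nD := gram_nonneg' M ψ hcont _ hWΔc hWΔ
  rw [← hA] at pA nA
  rw [← hD] at nD
  have hunit : IsUnit Mψ := by
    rw [← Matrix.mulVec_injective_iff_isUnit]
    intro u v huv
    by_contra hne
    have h1 := pA (u - v) (sub_ne_zero.mpr hne)
    have h2 := nD (u - v)
    have h3 : Mψ *ᵥ (u - v) = 0 := by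
      rw [Matrix.mulVec_sub]; exact sub_eq_zero.mpr huv
    have h4 : (u - v) ⬝ᵥ (Mψ *ᵥ (u - v)) = 0 := by rw [h3, dotProduct_zero]
    rw [hMAD, Matrix.add_mulVec, dotProduct_add] at h4
    linarith
  have hdet : IsUnit Mψ.det := (Matrix.isUnit_iff_isUnit_det _).mp hunit
  have hQ : Qψ = Mψ⁻¹ * (h₀ ^ 2 • gram M ψ We + D) := by
    rw [hQψ, gram_add' M ψ hcont (fun α => h₀ ^ 2 * We α) WΔu (by fun_prop) hWΔc,
      gram_smul']
  have hL : Lψ = Mψ⁻¹ * (h₀ • gram M ψ We) := by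
    rw [hLψ, gram_smul']
  have hMQ : Mψ * Qψ = h₀ ^ 2 • gram M ψ We + D := by
    rw [hQ, Matrix.mul_nonsing_inv_cancel_left _ _ hdet]
  have hML : Mψ * Lψ = h₀ • gram M ψ We := by
    rw [hL, Matrix.mul_nonsing_inv_cancel_left _ _ hdet]
  set x := θ j - θstar with hx
  set y := θ (j + 1) - θstar with hy
  have hyx : y = Qψ *ᵥ x - h₀ • (Lψ *ᵥ x) := by
    have : y = (Qψ *ᵥ θ j + Lψ *ᵥ (c - h₀ • θ j)) -
        (Qψ *ᵥ θstar + Lψ *ᵥ (c - h₀ • θstar)) := by rw [← hfix, ← hθ]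
    rw [this, hx]
    simp only [Matrix.mulVec_sub, Matrix.mulVec_smul, smul_sub]
    abel
  have hMy : Mψ *ᵥ y = D *ᵥ x := by
    rw [hyx, Matrix.mulVec_sub, Matrix.mulVec_smul, Matrix.mulVec_mulVec,
      Matrix.mulVec_mulVec, hMQ, hML, Matrix.add_mulVec, Matrix.smul_mulVec,
      Matrix.smul_mulVec, smul_smul, sq]
    abel
  have e1 : y ⬝ᵥ (Mψ *ᵥ y) = y ⬝ᵥ (D *ᵥ x) := by rw [hMy]
  have e2 : y ⬝ᵥ (Mψ *ᵥ y) = y ⬝ᵥ (A *ᵥ y) + y ⬝ᵥ (D *ᵥ y) := by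
    rw [hMAD, Matrix.add_mulVec, dotProduct_add]
  have e3 : x ⬝ᵥ (Mψ *ᵥ x) = x ⬝ᵥ (A *ᵥ x) + x ⬝ᵥ (D *ᵥ x) := by
    rw [hMAD, Matrix.add_mulVec, dotProduct_add]
  have e4 : x ⬝ᵥ (D *ᵥ y) = y ⬝ᵥ (D *ᵥ x) := gram_symm' M ψ _ x y
  have e5 := nD (x - y)
  rw [Matrix.mulVec_sub, dotProduct_sub, sub_dotProduct x y, sub_dotProduct x y] at e5
  have a1 := nA x
  have a2 := nA y
  have d2 := nD y
  refine ⟨Real.sqrt_le_sqrt (by linarith), fun hne => ?_⟩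
  have a3 := pA x (sub_ne_zero.mpr hne)
  exact Real.sqrt_lt_sqrt (by linarith) (by linarith)
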